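/- arXiv:1007.3807 — 2 statements merged into one kernel-verified Lean document; each statement's English description precedes it below -/
import Mathlib

section
/- Let N be a subspace of K^V with K = F², v ∈ V, and X, Y ⊆ V∖{v}. Then λ_{N∖v}(X) + λ_{N/v}(Y) ≥ λ_N(X∩Y) + λ_N(X∪Y∪{v}) − 1, where λ_P(U) = (dim P − dim(P×(W∖U)) − dim(P×U))/2 for a chain-group P on ground set W. -/
variable {F : Type*} [Field F] {V : Type*} [Fintype V] [DecidableEq V]

def bplusL (F : Type*) [Field F] : (F × F) →ₗ[F] (F × F) →ₗ[F] F :=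
  LinearMap.mk₂ F (fun x y => x.1 * y.2 + x.2 * y.1)
    (by intros; simp [Prod.fst_add, Prod.snd_add]; ring)
    (by intros; simp [Prod.smul_fst, Prod.smul_snd, smul_eq_mul]; ring)
    (by intros; simp [Prod.fst_add, Prod.snd_add]; ring)
    (by intros; simp [Prod.smul_fst, Prod.smul_snd, smul_eq_mul]; ring)

def bminusL (F : Type*) [Field F] : (F × F) →ₗ[F] (F × F) →ₗ[F] F :=
  LinearMap.mk₂ F (fun x y => x.1 * y.2 - x.2 * y.1)
    (by intros; simp [Prod.fst_add, Prod.snd_add]; ring)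
    (by intros; simp [Prod.smul_fst, Prod.smul_snd, smul_eq_mul]; ring)
    (by intros; simp [Prod.fst_add, Prod.snd_add]; ring)
    (by intros; simp [Prod.smul_fst, Prod.smul_snd, smul_eq_mul]; ring)

/-- Restriction of chains to a subset `X` of the ground set. -/
def res (F K : Type*) [Semiring F] [AddCommMonoid K] [Module F K]
    {V : Type*} (X : Finset V) : (V → K) →ₗ[F] ({x // x ∈ X} → K) :=
  LinearMap.funLeft F K Subtype.val

/-- Chains vanishing outside `X`. -/
def vanish (F : Type*) [Semiring F] {K : Type*} [AddCommMonoid K] [Module F K]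
    {V : Type*} (X : Finset V) : Submodule F (V → K) where
  carrier := {f | ∀ v ∉ X, f v = 0}
  add_mem' := by
    intro a b ha hb v hv
    simp only [Pi.add_apply, ha v hv, hb v hv, add_zero]
  zero_mem' := by intro v hv; rfl
  smul_mem' := by
    intro c a ha v hv
    simp only [Pi.smul_apply, ha v hv, smul_zero]

/-- `N×X`, the restriction to `X` of the chains in `N` vanishing outside `X`. -/
def timesTo {W : Type*} {K : Type*} [AddCommGroup K] [Module F K]
    (N : Submodule F (W → K)) (X : Finset W) : Submodule F ({x // x ∈ X} → K) :=
  (N ⊓ vanish F X).map (res F K X)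

/-- The connectivity function
`λ_N(U) = (dim N − dim(N×(W∖U)) − dim(N×U)) / 2` of a chain-group `N`. -/
noncomputable def lam {W : Type*} [Fintype W] [DecidableEq W]
    {K : Type*} [AddCommGroup K] [Module F K]
    (N : Submodule F (W → K)) (U : Finset W) : ℚ :=
  ((Module.finrank F N : ℚ) - (Module.finrank F (timesTo N Uᶜ) : ℚ)
    - (Module.finrank F (timesTo N U) : ℚ)) / 2

/-- The constraint `⟨f(v),(1,0)⟩_K = 0` for all `v ∈ X`, used for deletion. -/
def delC (β : (F × F) →ₗ[F] (F × F) →ₗ[F] F) (X : Finset V) :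
    Submodule F (V → F × F) :=
  ⨅ v ∈ X, LinearMap.ker ((β.flip (1, 0)).comp (LinearMap.proj v))

/-- The constraint `⟨f(v),(0,1)⟩_K = 0` for all `v ∈ X`, used for contraction. -/
def conC (β : (F × F) →ₗ[F] (F × F) →ₗ[F] F) (X : Finset V) :
    Submodule F (V → F × F) :=
  ⨅ v ∈ X, LinearMap.ker ((β.flip (0, 1)).comp (LinearMap.proj v))

/-- The deletion `N∖X` of a chain-group `N`. -/
def deleteCG (β : (F × F) →ₗ[F] (F × F) →ₗ[F] F) (N : Submodule F (V → F × F))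
    (X : Finset V) : Submodule F ({x // x ∈ Xᶜ} → F × F) :=
  (N ⊓ delC β X).map (res F (F × F) Xᶜ)

/-- The contraction `N/X` of a chain-group `N`. -/
def contractCG (β : (F × F) →ₗ[F] (F × F) →ₗ[F] F) (N : Submodule F (V → F × F))
    (X : Finset V) : Submodule F ({x // x ∈ Xᶜ} → F × F) :=
  (N ⊓ conC β X).map (res F (F × F) Xᶜ)

/-!
Let `D` and `C` consist of the chains in `N` satisfying the deletion and the contraction constraint
at `v`. Each constraint is a single linear equation, so each costs at most one dimension; after
halving, this is the `- 1` of the inequality. Restricting away from `v` kills the chains supported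
on `{v}`, which lowers `dim D` and the two dimensions subtracted from it by the same amount, and so
can only raise `λ`; likewise for `C`. What remains is the formula
`dim A + dim B = dim (A + B) + dim (A ∩ B)`, applied once to the chains of `D` and `C` supported on
`X ∪ {v}` and `Y ∪ {v}`, and once to those supported off `X` and off `Y`. A chain satisfying both
constraints vanishes at `v`, so the intersections are supported on `X ∩ Y` and off `X ∪ Y ∪ {v}`.
-/

open Module

section RankNullity

variable {R E E' : Type*} [DivisionRing R] [AddCommGroup E] [Module R E]
  [AddCommGroup E'] [Module R E']

theorem finrank_map_add_finrank_inf_ker (φ : E →ₗ[R] E') (P : Submodule R E)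
    [FiniteDimensional R P] :
    finrank R (P.map φ) + finrank R ↥(P ⊓ LinearMap.ker φ) = finrank R P := by
  rw [← LinearMap.finrank_range_add_finrank_ker (φ.domRestrict P), LinearMap.range_domRestrict,
    LinearMap.ker_domRestrict, ← Submodule.map_comap_subtype, Submodule.finrank_map_subtype_eq]

theorem finrank_le_finrank_inf_ker_add_one (φ : E →ₗ[R] R) (P : Submodule R E)
    [FiniteDimensional R P] :
    finrank R P ≤ finrank R ↥(P ⊓ LinearMap.ker φ) + 1 := by
  have hmap : finrank R (P.map φ) ≤ 1 := finrank_self R ▸ Submodule.finrank_le (P.map φ)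
  have hsum := finrank_map_add_finrank_inf_ker φ P
  lia

end RankNullity

section ChainGroup

variable {K : Type*} [AddCommGroup K] [Module F K] {W : Type*}

theorem mem_vanish {X : Finset W} {f : W → K} : f ∈ vanish F X ↔ ∀ w ∉ X, f w = 0 :=
  Iff.rfl

theorem vanish_mono {X Y : Finset W} (h : X ⊆ Y) :
    (vanish F X : Submodule F (W → K)) ≤ vanish F Y :=
  fun _ hf w hw ↦ hf w fun hwX ↦ hw (h hwX)

theorem vanish_inf_vanish [DecidableEq W] (X Y : Finset W) :
    (vanish F X ⊓ vanish F Y : Submodule F (W → K)) = vanish F (X ∩ Y) := by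
  refine le_antisymm ?_ (le_inf (vanish_mono Finset.inter_subset_left)
    (vanish_mono Finset.inter_subset_right))
  rintro f ⟨hfX, hfY⟩ w hw
  by_cases hwX : w ∈ X
  · exact hfY w fun hwY ↦ hw (Finset.mem_inter.2 ⟨hwX, hwY⟩)
  · exact hfX w hwX

theorem mem_ker_res {X : Finset W} {f : W → K} :
    f ∈ LinearMap.ker (res F K X) ↔ ∀ w ∈ X, f w = 0 :=
  LinearMap.mem_ker.trans (funext_iff.trans Subtype.forall)

theorem ker_res [Fintype W] [DecidableEq W] (X : Finset W) :
    LinearMap.ker (res F K X) = vanish F Xᶜ := by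
  ext f
  rw [mem_ker_res, mem_vanish]
  simp only [Finset.mem_compl, not_not]

theorem disjoint_vanish_ker_res (X : Finset W) :
    Disjoint (vanish F X) (LinearMap.ker (res F K X)) := by
  refine Submodule.disjoint_def.2 fun f hfX hf ↦ funext fun w ↦ ?_
  by_cases hw : w ∈ X
  · exact mem_ker_res.1 hf w hw
  · exact hfX w hw

theorem finrank_timesTo (N : Submodule F (W → K)) (X : Finset W) :
    finrank F (timesTo N X) = finrank F ↥(N ⊓ vanish F X) := by
  have hinj : Function.Injective ((res F K X).domRestrict (N ⊓ vanish F X)) :=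
    LinearMap.injective_domRestrict_iff.2 ((disjoint_vanish_ker_res X).mono_left inf_le_right)
  rw [timesTo, ← LinearMap.range_domRestrict, LinearMap.finrank_range_of_inj hinj]

theorem finrank_timesTo_add_finrank_timesTo_le [Finite W] [DecidableEq W] [FiniteDimensional F K]
    {N P Q : Submodule F (W → K)} {T : Finset W} (hP : P ≤ N) (hQ : Q ≤ N)
    (hPQ : P ⊓ Q ≤ vanish F T) (A B : Finset W) :
    finrank F (timesTo P A) + finrank F (timesTo Q B)
      ≤ finrank F (timesTo N (A ∪ B)) + finrank F (timesTo N (A ∩ B ∩ T)) := by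
  have hsup : P ⊓ vanish F A ⊔ Q ⊓ vanish F B ≤ N ⊓ vanish F (A ∪ B) :=
    sup_le (inf_le_inf hP (vanish_mono Finset.subset_union_left))
      (inf_le_inf hQ (vanish_mono Finset.subset_union_right))
  have hinf : (P ⊓ vanish F A) ⊓ (Q ⊓ vanish F B) ≤ N ⊓ vanish F (A ∩ B ∩ T) := by
    rw [inf_inf_inf_comm, vanish_inf_vanish, ← vanish_inf_vanish _ T]
    exact le_inf (inf_le_left.trans (inf_le_left.trans hP))
      (le_inf inf_le_right (inf_le_left.trans hPQ))
  simp only [finrank_timesTo]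
  rw [← Submodule.finrank_sup_add_finrank_inf_eq]
  exact add_le_add (Submodule.finrank_mono hsup) (Submodule.finrank_mono hinf)

variable [Fintype W] [DecidableEq W]

theorem two_mul_lam (N : Submodule F (W → K)) (U : Finset W) :
    2 * lam N U
      = finrank F N - finrank F (timesTo N Uᶜ) - finrank F (timesTo N U) := by
  rw [lam, mul_div_cancel₀ _ two_ne_zero]

theorem map_res_inf_vanish_subtype (P : Submodule F (W → K)) {T U : Finset W} (hU : Tᶜ ⊆ U) :
    P.map (res F K T) ⊓ vanish F (U.subtype (· ∈ T)) = (P ⊓ vanish F U).map (res F K T) := by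
  ext g
  constructor
  · rintro ⟨⟨f, hf, rfl⟩, hg⟩
    refine ⟨f, ⟨hf, fun w hw ↦ ?_⟩, rfl⟩
    have hwT : w ∈ T := by
      by_contra hwT
      exact hw (hU (Finset.mem_compl.2 hwT))
    exact hg ⟨w, hwT⟩ (by simpa using hw)
  · rintro ⟨f, ⟨hf, hfU⟩, rfl⟩
    exact ⟨⟨f, hf, rfl⟩, fun w hw ↦ hfU w (by simpa using hw)⟩

variable [FiniteDimensional F K]

theorem finrank_map_res_add_finrank_timesTo_compl (P : Submodule F (W → K)) (T : Finset W) :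
    finrank F (P.map (res F K T)) + finrank F (timesTo P Tᶜ) = finrank F P := by
  rw [finrank_timesTo, ← ker_res, finrank_map_add_finrank_inf_ker]

theorem finrank_timesTo_map_res_add_finrank_timesTo_compl (P : Submodule F (W → K))
    {T U : Finset W} (hU : Tᶜ ⊆ U) :
    finrank F (timesTo (P.map (res F K T)) (U.subtype (· ∈ T))) + finrank F (timesTo P Tᶜ)
      = finrank F (timesTo P U) := by
  have hinf : P ⊓ vanish F Tᶜ = P ⊓ vanish F U ⊓ LinearMap.ker (res F K T) := by
    rw [ker_res, inf_assoc, inf_eq_right.2 (vanish_mono hU)]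
  simp only [finrank_timesTo]
  rw [map_res_inf_vanish_subtype P hU, hinf, finrank_map_add_finrank_inf_ker]

theorem two_mul_lam_map_res (P : Submodule F (W → K)) {T X : Finset W} (hX : X ⊆ T) :
    2 * lam (P.map (res F K T)) (X.subtype (· ∈ T))
      = finrank F P + finrank F (timesTo P Tᶜ)
        - finrank F (timesTo P Xᶜ) - finrank F (timesTo P (X ∪ Tᶜ)) := by
  have hcompl : (X.subtype (· ∈ T))ᶜ = Xᶜ.subtype (· ∈ T) := by
    ext w
    simp
  have hunion : X.subtype (· ∈ T) = (X ∪ Tᶜ).subtype (· ∈ T) := by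
    ext w
    simp
  rw [two_mul_lam, hcompl, hunion, ← finrank_map_res_add_finrank_timesTo_compl P T,
    ← finrank_timesTo_map_res_add_finrank_timesTo_compl P (Finset.compl_subset_compl.2 hX),
    ← finrank_timesTo_map_res_add_finrank_timesTo_compl P Finset.subset_union_right]
  push_cast
  ring

theorem le_two_mul_lam_map_res_inf_ker (N : Submodule F (W → K)) (φ : (W → K) →ₗ[F] F)
    {T X : Finset W} (hX : X ⊆ T) :
    (finrank F N : ℚ) - 1 - finrank F (timesTo (N ⊓ LinearMap.ker φ) Xᶜ)
        - finrank F (timesTo (N ⊓ LinearMap.ker φ) (X ∪ Tᶜ))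
      ≤ 2 * lam ((N ⊓ LinearMap.ker φ).map (res F K T)) (X.subtype (· ∈ T)) := by
  have hcodim : (finrank F N : ℚ) ≤ finrank F ↥(N ⊓ LinearMap.ker φ) + 1 :=
    mod_cast finrank_le_finrank_inf_ker_add_one φ N
  rw [two_mul_lam_map_res _ hX]
  linarith [Nat.cast_nonneg (α := ℚ) (finrank F (timesTo (N ⊓ LinearMap.ker φ) Tᶜ))]

end ChainGroup

theorem separatingLeft_bplusL (F : Type*) [Field F] : (bplusL F).SeparatingLeft :=
  fun x hx ↦ Prod.ext (by simpa [bplusL] using hx (0, 1)) (by simpa [bplusL] using hx (1, 0))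

theorem separatingLeft_bminusL (F : Type*) [Field F] : (bminusL F).SeparatingLeft :=
  fun x hx ↦ Prod.ext (by simpa [bminusL] using hx (0, 1)) (by simpa [bminusL] using hx (1, 0))

section DeleteContract

variable (β : (F × F) →ₗ[F] (F × F) →ₗ[F] F)

theorem delC_singleton {W : Type*} (v : W) :
    delC β {v} = LinearMap.ker ((β.flip (1, 0)).comp (LinearMap.proj v)) := by
  simp [delC]

theorem conC_singleton {W : Type*} (v : W) :
    conC β {v} = LinearMap.ker ((β.flip (0, 1)).comp (LinearMap.proj v)) := by
  simp [conC]

variable {β} in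
theorem delC_inf_conC_le_vanish (hβ : β.SeparatingLeft) (v : V) :
    delC β {v} ⊓ conC β {v} ≤ vanish F {v}ᶜ := by
  rw [delC_singleton, conC_singleton]
  rintro f ⟨hdel, hcon⟩ w hw
  obtain rfl : w = v := by simpa using hw
  refine hβ (f w) fun y ↦ ?_
  have hy : y = y.1 • (1, 0) + y.2 • (0, 1) := by simp
  have hdel : β (f w) (1, 0) = 0 := hdel
  have hcon : β (f w) (0, 1) = 0 := hcon
  rw [hy, map_add, map_smul, map_smul, hdel, hcon, smul_zero, smul_zero, add_zero]

theorem le_two_mul_lam_deleteCG (N : Submodule F (V → F × F)) {v : V} {X : Finset V}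
    (hX : v ∉ X) :
    (finrank F N : ℚ) - 1 - finrank F (timesTo (N ⊓ delC β {v}) Xᶜ)
        - finrank F (timesTo (N ⊓ delC β {v}) (X ∪ {v}))
      ≤ 2 * lam (deleteCG β N {v}) (X.subtype (· ∈ ({v}ᶜ : Finset V))) := by
  have hXv : X ⊆ {v}ᶜ := Finset.subset_compl_singleton.2 hX
  have hlam := le_two_mul_lam_map_res_inf_ker N ((β.flip (1, 0)).comp (LinearMap.proj v)) hXv
  rwa [← delC_singleton, compl_compl] at hlam

theorem le_two_mul_lam_contractCG (N : Submodule F (V → F × F)) {v : V} {X : Finset V}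
    (hX : v ∉ X) :
    (finrank F N : ℚ) - 1 - finrank F (timesTo (N ⊓ conC β {v}) Xᶜ)
        - finrank F (timesTo (N ⊓ conC β {v}) (X ∪ {v}))
      ≤ 2 * lam (contractCG β N {v}) (X.subtype (· ∈ ({v}ᶜ : Finset V))) := by
  have hXv : X ⊆ {v}ᶜ := Finset.subset_compl_singleton.2 hX
  have hlam := le_two_mul_lam_map_res_inf_ker N ((β.flip (0, 1)).comp (LinearMap.proj v)) hXv
  rwa [← conC_singleton, compl_compl] at hlam

end DeleteContract

theorem lam_delete_add_lam_contract_general (β : (F × F) →ₗ[F] (F × F) →ₗ[F] F)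
    (hβ : β.SeparatingLeft) (N : Submodule F (V → F × F)) (v : V) (X Y : Finset V)
    (hX : v ∉ X) (hY : v ∉ Y) :
    lam N (X ∩ Y) + lam N (X ∪ Y ∪ {v}) - 1
      ≤ lam (deleteCG β N {v}) (X.subtype (· ∈ ({v}ᶜ : Finset V)))
        + lam (contractCG β N {v}) (Y.subtype (· ∈ ({v}ᶜ : Finset V))) := by
  have hvanish : (N ⊓ delC β {v}) ⊓ (N ⊓ conC β {v}) ≤ vanish F {v}ᶜ :=
    (inf_le_inf inf_le_right inf_le_right).trans (delC_inf_conC_le_vanish hβ v)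
  have huncross := finrank_timesTo_add_finrank_timesTo_le inf_le_left inf_le_left hvanish
  have hinside := huncross (X ∪ {v}) (Y ∪ {v})
  have houtside := huncross Xᶜ Yᶜ
  have hinter : (X ∪ {v}) ∩ (Y ∪ {v}) ∩ {v}ᶜ = X ∩ Y := by
    ext w
    rcases eq_or_ne w v with rfl | hw <;> simp [*]
  rw [← Finset.union_union_distrib_right, hinter] at hinside
  rw [← Finset.compl_inter, ← Finset.compl_union, ← Finset.compl_union] at houtside
  qify at hinside houtside
  linarith [two_mul_lam N (X ∩ Y), two_mul_lam N (X ∪ Y ∪ {v}),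
    le_two_mul_lam_deleteCG β N hX, le_two_mul_lam_contractCG β N hY]

/-- Bixby-type inequality for chain-groups:
`λ_{N∖v}(X) + λ_{N/v}(Y) ≥ λ_N(X∩Y) + λ_N(X∪Y∪{v}) − 1`. -/
theorem lam_delete_add_lam_contract (β : (F × F) →ₗ[F] (F × F) →ₗ[F] F)
    (hβ : β = bplusL F ∨ β = bminusL F)
    (N : Submodule F (V → F × F)) (v : V) (X Y : Finset V)
    (hX : v ∉ X) (hY : v ∉ Y) :
    lam N (X ∩ Y) + lam N (X ∪ Y ∪ {v}) - 1
      ≤ lam (deleteCG β N {v}) (X.subtype (· ∈ ({v}ᶜ : Finset V)))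
        + lam (contractCG β N {v}) (Y.subtype (· ∈ ({v}ᶜ : Finset V))) :=
  lam_delete_add_lam_contract_general β
    (hβ.elim (· ▸ separatingLeft_bplusL F) (· ▸ separatingLeft_bminusL F)) N v X Y hX hY
end

section
/- Let N be a Lagrangian chain-group on V to K = F², let X, Y ⊆ V be disjoint, and let k be an integer. Then min{λ_N(Z) : X ⊆ Z ⊆ V∖Y} = max{λ_{N∖U/W}(X) : (U,W) a partition of V∖(X∪Y)} (generalization of Tutte's linking theorem). -/
variable {F : Type*} [Field F] {V : Type*} [Fintype V] [DecidableEq V]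

/-- The minor `N/X∖Y` of a chain-group `N`, obtained by contracting `X` and
deleting `Y`, on the ground set `V∖(X∪Y)`. -/
def minorCG (β : (F × F) →ₗ[F] (F × F) →ₗ[F] F) (N : Submodule F (V → F × F))
    (X Y : Finset V) : Submodule F ({x // x ∈ (X ∪ Y)ᶜ} → F × F) :=
  (N ⊓ conC β X ⊓ delC β Y).map (res F (F × F) (X ∪ Y)ᶜ)

/-!
Write `box P Q` for the chains whose first coordinate is supported in `P` and whose second
coordinate is supported in `Q`. Deletion and contraction are intersections with boxes followed by
restriction, so every connectivity involved is expressed by the dimensions `d(P, Q)` of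
`N ∩ box P Q`: for `Z` in the minor `N∖U/W` it is `|Z| - d(Z ∪ U, Z ∪ W) + d(U, W)`, a minor of a
Lagrangian chain-group being Lagrangian. The function `d` is supermodular. Hence connectivity can
only drop under taking minors, and together with the symmetry `λ(Z) = λ(Zᶜ)` this yields the upper
bound on the connectivity of the minors. Conversely, the elements outside `X ∪ Y` are removed one
at a time: if deleting `e` fails because of a set `Z₁` and contracting `e` fails because of `Z₂`,
then by supermodularity one of `Z₁ ∩ Z₂` and `Z₁ ∪ Z₂ ∪ {e}` already has connectivity below `k`.
-/

open Module (finrank)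

section LinearAlgebra

variable {E : Type*} [AddCommGroup E] [Module F E]

lemma finrank_map_add_finrank_inf_ker_s18 [FiniteDimensional F E] {E' : Type*} [AddCommGroup E']
    [Module F E'] (g : E →ₗ[F] E') (M : Submodule F E) :
    finrank F (M.map g) + finrank F ↥(M ⊓ LinearMap.ker g) = finrank F M := by
  rw [← (g.domRestrict M).finrank_range_add_finrank_ker, LinearMap.range_domRestrict,
    LinearMap.ker_domRestrict, ← Submodule.finrank_map_subtype_eq, Submodule.map_comap_subtype]

lemma orthogonal_sup (B : LinearMap.BilinForm F E) (M N : Submodule F E) :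
    B.orthogonal (M ⊔ N) = B.orthogonal M ⊓ B.orthogonal N := by
  refine le_antisymm (le_inf (LinearMap.BilinForm.orthogonal_le le_sup_left)
    (LinearMap.BilinForm.orthogonal_le le_sup_right)) ?_
  rintro g ⟨hM, hN⟩
  exact (sup_le hM hN : M ⊔ N ≤ LinearMap.ker (B.flip g))

lemma finrank_orthogonal_inf_orthogonal [FiniteDimensional F E] {B : LinearMap.BilinForm F E}
    (hB : B.Nondegenerate) (M N : Submodule F E) :
    finrank F ↥(B.orthogonal M ⊓ B.orthogonal N) + finrank F M + finrank F N =
      finrank F E + finrank F ↥(M ⊓ N) := by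
  have horth := LinearMap.BilinForm.finrank_orthogonal hB (M ⊔ N)
  have hsup := Submodule.finrank_sup_add_finrank_inf_eq M N
  have hle := (M ⊔ N).finrank_le
  rw [orthogonal_sup] at horth
  omega

end LinearAlgebra

/-- The nondegenerate bilinear forms on `F²` for which both coordinate axes are isotropic, such as
`b⁺` and `b⁻`. No symmetry is demanded: these are the forms `a * x₁ * y₂ + b * x₂ * y₁` with `a` and
`b` nonzero. -/
structure IsHyperbolic (β : LinearMap.BilinForm F (F × F)) : Prop where
  nondegenerate : β.Nondegenerate
  isotropic_fst : β (1, 0) (1, 0) = 0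
  isotropic_snd : β (0, 1) (0, 1) = 0

lemma isHyperbolic_bplusL : IsHyperbolic (bplusL F) where
  nondegenerate :=
    ⟨fun x hx => Prod.ext (by simpa [bplusL] using hx (0, 1))
        (by simpa [bplusL] using hx (1, 0)),
      fun y hy => Prod.ext (by simpa [bplusL] using hy (0, 1))
        (by simpa [bplusL] using hy (1, 0))⟩
  isotropic_fst := by simp [bplusL]
  isotropic_snd := by simp [bplusL]

lemma isHyperbolic_bminusL : IsHyperbolic (bminusL F) where
  nondegenerate :=
    ⟨fun x hx => Prod.ext (by simpa [bminusL] using hx (0, 1))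
        (by simpa [bminusL] using hx (1, 0)),
      fun y hy => Prod.ext (by simpa [bminusL] using hy (0, 1))
        (by simpa [bminusL] using hy (1, 0))⟩
  isotropic_fst := by simp [bminusL]
  isotropic_snd := by simp [bminusL]

namespace IsHyperbolic

variable {β : LinearMap.BilinForm F (F × F)} (hβ : IsHyperbolic β)
include hβ

lemma apply_eq (x y : F × F) :
    β x y = β (1, 0) (0, 1) * (x.1 * y.2) + β (0, 1) (1, 0) * (x.2 * y.1) := by
  have hdecomp (z : F × F) : z = z.1 • ((1, 0) : F × F) + z.2 • ((0, 1) : F × F) := by simp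
  calc β x y = β (x.1 • (1, 0) + x.2 • (0, 1)) (y.1 • (1, 0) + y.2 • (0, 1)) := by
        rw [← hdecomp x, ← hdecomp y]
    _ = β (1, 0) (0, 1) * (x.1 * y.2) + β (0, 1) (1, 0) * (x.2 * y.1) := by
        simp only [map_add, map_smul, LinearMap.add_apply, LinearMap.smul_apply,
          hβ.isotropic_fst, hβ.isotropic_snd, smul_eq_mul]
        ring

lemma apply_fst_snd_ne_zero : β (1, 0) (0, 1) ≠ 0 := fun h =>
  one_ne_zero (congrArg Prod.fst
    (hβ.nondegenerate.1 (1, 0) fun y => by rw [hβ.apply_eq, h]; simp))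

lemma apply_snd_fst_ne_zero : β (0, 1) (1, 0) ≠ 0 := fun h =>
  one_ne_zero (congrArg Prod.snd
    (hβ.nondegenerate.1 (0, 1) fun y => by rw [hβ.apply_eq, h]; simp))

end IsHyperbolic

section ChainForm

variable {α K : Type*} [Fintype α] [AddCommGroup K] [Module F K]

/-- The bilinear form `⟨f, g⟩ = ∑ v, β (f v) (g v)` on chains induced by a form `β` on their
values. -/
def chainForm (β : LinearMap.BilinForm F K) : LinearMap.BilinForm F (α → K) :=
  ∑ v, β.compl₁₂ (LinearMap.proj v) (LinearMap.proj v)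

lemma chainForm_apply (β : LinearMap.BilinForm F K) (f g : α → K) :
    chainForm β f g = ∑ v, β (f v) (g v) := by
  simp [chainForm, LinearMap.sum_apply]

lemma chainForm_nondegenerate {β : LinearMap.BilinForm F K} (hβ : β.Nondegenerate) :
    (chainForm (α := α) β).Nondegenerate := by
  classical
  refine ⟨fun f hf => funext fun v => hβ.1 _ fun x => ?_,
    fun f hf => funext fun v => hβ.2 _ fun x => ?_⟩ <;>
  · have h := hf (Pi.single v x)
    rw [chainForm_apply, Finset.sum_eq_single v (fun w _ hw => by simp [hw]) (by simp)] at h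
    simpa using h

lemma finrank_chains : finrank F (α → F × F) = 2 * Fintype.card α := by
  simp [Module.finrank_pi_fintype, mul_comm]

end ChainForm

section Box

variable {α : Type*}

/-- The chains whose first coordinate is supported in `P` and whose second coordinate is
supported in `Q`. -/
def box (F : Type*) [Field F] (P Q : Finset α) : Submodule F (α → F × F) :=
  (vanish F P).comap ((LinearMap.fst F F F).compLeft α) ⊓
    (vanish F Q).comap ((LinearMap.snd F F F).compLeft α)

lemma mem_box {P Q : Finset α} {f : α → F × F} :
    f ∈ box F P Q ↔ (∀ v ∉ P, (f v).1 = 0) ∧ ∀ v ∉ Q, (f v).2 = 0 := Iff.rfl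

lemma box_mono {P Q P' Q' : Finset α} (hP : P ⊆ P') (hQ : Q ⊆ Q') :
    box F P Q ≤ box F P' Q' := fun _ hf =>
  ⟨fun v hv => hf.1 v fun h => hv (hP h), fun v hv => hf.2 v fun h => hv (hQ h)⟩

lemma vanish_eq_box (Z : Finset α) : vanish F Z = box F Z Z := by
  ext f
  simp [vanish, mem_box, Prod.ext_iff, forall_and]

lemma box_inf_box [DecidableEq α] (P Q P' Q' : Finset α) :
    box F P Q ⊓ box F P' Q' = box F (P ∩ P') (Q ∩ Q') := by
  ext f
  simp only [Submodule.mem_inf, mem_box, Finset.mem_inter]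
  grind

/-- A chain in `box F P Q` amounts to a choice of first coordinates on `P` and of second
coordinates on `Q`. -/
def boxEquiv (F : Type*) [Field F] [DecidableEq α] (P Q : Finset α) :
    box F P Q ≃ₗ[F] (P → F) × (Q → F) where
  toFun f := (fun p => (f.1 p).1, fun q => (f.1 q).2)
  map_add' _ _ := rfl
  map_smul' _ _ := rfl
  invFun g := ⟨fun v => (if h : v ∈ P then g.1 ⟨v, h⟩ else 0, if h : v ∈ Q then g.2 ⟨v, h⟩ else 0),
    mem_box.2 ⟨fun v hv => by simp [hv], fun v hv => by simp [hv]⟩⟩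
  left_inv f := by
    obtain ⟨hP, hQ⟩ := mem_box.1 f.2
    ext v
    · by_cases h : v ∈ P <;> simp [h, hP]
    · by_cases h : v ∈ Q <;> simp [h, hQ]
  right_inv g := by ext <;> simp

lemma finrank_box (P Q : Finset α) : finrank F (box F P Q) = P.card + Q.card := by
  classical
  rw [(boxEquiv F P Q).finrank_eq]
  simp

variable [Fintype α] [DecidableEq α]

lemma ker_res_s18 (S : Finset α) : LinearMap.ker (res F (F × F) S) = box F Sᶜ Sᶜ := by
  ext f
  simp [res, mem_box, funext_iff, Prod.ext_iff, forall_and]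

lemma comap_res_box (S P Q : Finset α) :
    (box F (P.subtype (· ∈ S)) (Q.subtype (· ∈ S))).comap (res F (F × F) S) =
      box F (P ∪ Sᶜ) (Q ∪ Sᶜ) := by
  ext f
  simp only [Submodule.mem_comap, mem_box, res, LinearMap.funLeft_apply, Subtype.forall,
    Finset.mem_subtype, Finset.mem_union, Finset.mem_compl]
  grind

lemma orthogonal_box {β : LinearMap.BilinForm F (F × F)} (hβ : IsHyperbolic β)
    (P Q : Finset α) : (chainForm β).orthogonal (box F P Q) = box F Qᶜ Pᶜ := by
  refine (Submodule.eq_of_le_of_finrank_eq (fun g hg f hf => ?_) ?_).symm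
  · obtain ⟨hgQ, hgP⟩ := mem_box.1 hg
    obtain ⟨hfP, hfQ⟩ := mem_box.1 hf
    rw [chainForm_apply]
    refine Finset.sum_eq_zero fun v _ => ?_
    have hfst : (f v).1 * (g v).2 = 0 := by
      by_cases hv : v ∈ P
      · rw [hgP v (by simpa using hv), mul_zero]
      · rw [hfP v hv, zero_mul]
    have hsnd : (f v).2 * (g v).1 = 0 := by
      by_cases hv : v ∈ Q
      · rw [hgQ v (by simpa using hv), mul_zero]
      · rw [hfQ v hv, zero_mul]
    rw [hβ.apply_eq, hfst, hsnd, mul_zero, mul_zero, add_zero]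
  · rw [LinearMap.BilinForm.finrank_orthogonal (chainForm_nondegenerate hβ.nondegenerate),
      finrank_chains, finrank_box, finrank_box, Finset.card_compl, Finset.card_compl]
    have := P.card_le_univ
    have := Q.card_le_univ
    omega

end Box

lemma lam_compl {α K : Type*} [Fintype α] [DecidableEq α] [AddCommGroup K] [Module F K]
    (N : Submodule F (α → K)) (Z : Finset α) : lam N Zᶜ = lam N Z := by
  rw [lam, lam, compl_compl, sub_right_comm]

section BoxDim

variable {α : Type*} (N : Submodule F (α → F × F))

/-- The dimension of the space of chains in `N` lying in `box F P Q`. -/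
noncomputable def boxDim (P Q : Finset α) : ℕ :=
  finrank F ↥(N ⊓ box F P Q)

lemma boxDim_empty : boxDim N ∅ ∅ = 0 := by
  have hbox : box F (∅ : Finset α) ∅ = ⊥ := by
    ext f
    simp [mem_box, funext_iff, Prod.ext_iff, forall_and]
  rw [boxDim, hbox, inf_bot_eq, finrank_bot]

variable [Finite α]

lemma boxDim_mono {P Q P' Q' : Finset α} (hP : P ⊆ P') (hQ : Q ⊆ Q') :
    boxDim N P Q ≤ boxDim N P' Q' :=
  Submodule.finrank_mono (inf_le_inf_left _ (box_mono hP hQ))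

lemma boxDim_supermodular [DecidableEq α] (P Q P' Q' : Finset α) :
    boxDim N P Q + boxDim N P' Q' ≤
      boxDim N (P ∩ P') (Q ∩ Q') + boxDim N (P ∪ P') (Q ∪ Q') := by
  unfold boxDim
  rw [← Submodule.finrank_sup_add_finrank_inf_eq, ← inf_inf_distrib_left, box_inf_box, add_comm]
  gcongr
  refine Submodule.finrank_mono (sup_le ?_ ?_)
  · exact inf_le_inf_left _ (box_mono Finset.subset_union_left Finset.subset_union_left)
  · exact inf_le_inf_left _ (box_mono Finset.subset_union_right Finset.subset_union_right)

lemma finrank_map_res_add_boxDim [DecidableEq α] (S P Q : Finset α) :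
    finrank F ((N ⊓ box F P Q).map (res F (F × F) S)) + boxDim N (P \ S) (Q \ S) =
      boxDim N P Q := by
  cases nonempty_fintype α
  have h := finrank_map_add_finrank_inf_ker_s18 (res F (F × F) S) (N ⊓ box F P Q)
  rwa [ker_res_s18, inf_assoc, box_inf_box, ← Finset.sdiff_eq_inter_compl,
    ← Finset.sdiff_eq_inter_compl] at h

lemma finrank_timesTo_s18 (Z : Finset α) : finrank F (timesTo N Z) = boxDim N Z Z := by
  classical
  have h := finrank_map_res_add_boxDim N Z Z Z
  rwa [Finset.sdiff_self, boxDim_empty, add_zero, ← vanish_eq_box] at h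

end BoxDim

section Lagrangian

variable {α : Type*} [Fintype α]

/-- The Lagrangian chain-groups: totally isotropic subspaces of `(F²)^α` of half the total
dimension. -/
structure IsLagrangian (β : LinearMap.BilinForm F (F × F)) (N : Submodule F (α → F × F)) :
    Prop where
  isotropic : ∀ f ∈ N, ∀ g ∈ N, chainForm β f g = 0
  finrank_eq : finrank F N = Fintype.card α

namespace IsLagrangian

variable {β : LinearMap.BilinForm F (F × F)} {N : Submodule F (α → F × F)}

lemma orthogonal_eq (hN : IsLagrangian β N) (hβ : β.Nondegenerate) :
    (chainForm β).orthogonal N = N := by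
  have hle : N ≤ (chainForm β).orthogonal N := fun g hg f hf => hN.isotropic f hf g hg
  refine (Submodule.eq_of_le_of_finrank_eq hle ?_).symm
  rw [LinearMap.BilinForm.finrank_orthogonal (chainForm_nondegenerate hβ), finrank_chains,
    hN.finrank_eq]
  omega

variable [DecidableEq α] (hN : IsLagrangian β N) (hβ : IsHyperbolic β)
include hN hβ

lemma boxDim_compl (P Q : Finset α) :
    boxDim N Qᶜ Pᶜ + P.card + Q.card = Fintype.card α + boxDim N P Q := by
  have h := finrank_orthogonal_inf_orthogonal (chainForm_nondegenerate hβ.nondegenerate)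
    N (box F P Q)
  rw [hN.orthogonal_eq hβ.nondegenerate, orthogonal_box hβ, finrank_box, finrank_chains,
    hN.finrank_eq] at h
  unfold boxDim
  omega

lemma lam_eq (Z : Finset α) : lam N Z = Z.card - boxDim N Z Z := by
  have h := hN.boxDim_compl hβ Z Z
  rw [lam, finrank_timesTo_s18, finrank_timesTo_s18, hN.finrank_eq, div_eq_iff two_ne_zero]
  qify at h
  linarith

end IsLagrangian

end Lagrangian

section Minor

variable {α : Type*} [Fintype α] [DecidableEq α] {β : LinearMap.BilinForm F (F × F)}

lemma conC_inf_delC (hβ : IsHyperbolic β) (W U : Finset α) :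
    conC β W ⊓ delC β U = box F Wᶜ Uᶜ := by
  ext f
  simp [conC, delC, mem_box, hβ.apply_eq (f _), hβ.apply_fst_snd_ne_zero,
    hβ.apply_snd_fst_ne_zero]

lemma minorCG_eq_map_res (hβ : IsHyperbolic β) (N : Submodule F (α → F × F)) (W U : Finset α) :
    minorCG β N W U = (N ⊓ box F Wᶜ Uᶜ).map (res F (F × F) (W ∪ U)ᶜ) := by
  rw [minorCG, inf_assoc, conC_inf_delC hβ]

lemma finrank_minorCG_add_boxDim (hβ : IsHyperbolic β) (N : Submodule F (α → F × F))
    {U W : Finset α} (hUW : Disjoint U W) :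
    finrank F (minorCG β N W U) + boxDim N U W = boxDim N Wᶜ Uᶜ := by
  have hU : Wᶜ \ (W ∪ U)ᶜ = U := by grind [Finset.mem_compl, Finset.disjoint_left]
  have hW : Uᶜ \ (W ∪ U)ᶜ = W := by grind [Finset.mem_compl]
  have h := finrank_map_res_add_boxDim N (W ∪ U)ᶜ Wᶜ Uᶜ
  rwa [hU, hW, ← minorCG_eq_map_res hβ] at h

lemma boxDim_minorCG_add_boxDim (hβ : IsHyperbolic β) (N : Submodule F (α → F × F))
    {U W Z : Finset α} (hUW : Disjoint U W) (hZ : Disjoint Z (U ∪ W)) :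
    boxDim (minorCG β N W U) (Z.subtype (· ∈ (W ∪ U)ᶜ)) (Z.subtype (· ∈ (W ∪ U)ᶜ)) +
      boxDim N U W = boxDim N (Z ∪ U) (Z ∪ W) := by
  have hfst : Wᶜ ∩ (Z ∪ (W ∪ U)ᶜᶜ) = Z ∪ U := by grind [Finset.mem_compl, Finset.disjoint_left]
  have hsnd : Uᶜ ∩ (Z ∪ (W ∪ U)ᶜᶜ) = Z ∪ W := by grind [Finset.mem_compl, Finset.disjoint_left]
  have hU : (Z ∪ U) \ (W ∪ U)ᶜ = U := by grind [Finset.mem_compl]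
  have hW : (Z ∪ W) \ (W ∪ U)ᶜ = W := by grind [Finset.mem_compl]
  have h := finrank_map_res_add_boxDim N (W ∪ U)ᶜ (Z ∪ U) (Z ∪ W)
  rw [hU, hW] at h
  rw [boxDim, minorCG_eq_map_res hβ, Submodule.map_inf_eq_map_inf_comap, comap_res_box, inf_assoc,
    box_inf_box, hfst, hsnd, h]

/-- The connectivity of `Z` in the minor of a Lagrangian chain-group `N` obtained by deleting `U`
and contracting `W`, for disjoint `Z`, `U` and `W`. It is computed on the ground set of `N`, so that
different minors can be compared without changing the ground set. -/
noncomputable def minorConn (N : Submodule F (α → F × F)) (U W Z : Finset α) : ℤ :=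
  Z.card - boxDim N (Z ∪ U) (Z ∪ W) + boxDim N U W

namespace IsLagrangian

variable {N : Submodule F (α → F × F)} (hN : IsLagrangian β N) (hβ : IsHyperbolic β)
include hN hβ

lemma isLagrangian_minorCG {U W : Finset α} (hUW : Disjoint U W) :
    IsLagrangian β (minorCG β N W U) where
  isotropic := by
    rw [minorCG_eq_map_res hβ]
    rintro _ ⟨f, ⟨hfN, hf⟩, rfl⟩ _ ⟨g, ⟨hgN, hg⟩, rfl⟩
    obtain ⟨hfW, hfU⟩ := mem_box.1 hf
    obtain ⟨hgW, hgU⟩ := mem_box.1 hg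
    have hremoved : ∀ v ∉ (W ∪ U)ᶜ, β (f v) (g v) = 0 := by
      intro v hv
      rw [hβ.apply_eq]
      grind [Finset.mem_compl]
    have hfg := hN.isotropic f hfN g hgN
    rw [chainForm_apply, ← Finset.sum_subset (Finset.subset_univ _) fun v _ => hremoved v,
      ← Finset.sum_coe_sort] at hfg
    rwa [chainForm_apply]
  finrank_eq := by
    have hminor := finrank_minorCG_add_boxDim hβ N hUW
    have hcompl := hN.boxDim_compl hβ U W
    have hcard := Finset.card_compl_add_card (W ∪ U)
    rw [Finset.card_union_of_disjoint hUW.symm] at hcard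
    rw [Fintype.card_coe]
    omega

lemma lam_eq_minorConn (Z : Finset α) : lam N Z = minorConn N ∅ ∅ Z := by
  simp [hN.lam_eq hβ, minorConn, boxDim_empty]

lemma lam_minorCG {U W Z : Finset α} (hUW : Disjoint U W) (hZ : Disjoint Z (U ∪ W)) :
    lam (minorCG β N W U) (Z.subtype (· ∈ (W ∪ U)ᶜ)) = minorConn N U W Z := by
  have hcard : (Z.subtype (· ∈ (W ∪ U)ᶜ)).card = Z.card := by
    rw [Finset.card_subtype, Finset.filter_true_of_mem]
    grind [Finset.mem_compl, Finset.disjoint_left]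
  have hdim := boxDim_minorCG_add_boxDim hβ N hUW hZ
  rw [(hN.isLagrangian_minorCG hβ hUW).lam_eq hβ, hcard, minorConn]
  push_cast [← hdim]
  ring

lemma minorConn_compl {U W Z : Finset α} (hUW : Disjoint U W) (hZ : Disjoint Z (U ∪ W)) :
    minorConn N U W (Z ∪ (U ∪ W))ᶜ = minorConn N U W Z := by
  have hcompl : (Z ∪ (U ∪ W))ᶜ.subtype (· ∈ (W ∪ U)ᶜ) = (Z.subtype (· ∈ (W ∪ U)ᶜ))ᶜ := by
    ext ⟨v, hv⟩
    simp only [Finset.mem_subtype, Finset.mem_compl]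
    grind [Finset.mem_compl]
  have hlam := lam_compl (minorCG β N W U) (Z.subtype (· ∈ (W ∪ U)ᶜ))
  rw [← hcompl, hN.lam_minorCG hβ hUW hZ, hN.lam_minorCG hβ hUW
    (disjoint_compl_left.mono_right Finset.subset_union_right)] at hlam
  exact_mod_cast hlam

end IsLagrangian

end Minor

section Linking

variable {α : Type*} [Finite α] [DecidableEq α] (N : Submodule F (α → F × F))

lemma minorConn_anti {U W U' W' Z : Finset α} (hU : U ⊆ U') (hW : W ⊆ W')
    (hZ : Disjoint Z (U' ∪ W')) : minorConn N U' W' Z ≤ minorConn N U W Z := by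
  have hsuper := boxDim_supermodular N (Z ∪ U) (Z ∪ W) U' W'
  have hinter₁ : (Z ∪ U) ∩ U' = U := by grind [Finset.disjoint_left]
  have hinter₂ : (Z ∪ W) ∩ W' = W := by grind [Finset.disjoint_left]
  rw [hinter₁, hinter₂, Finset.union_assoc, Finset.union_assoc,
    Finset.union_eq_right.2 hU, Finset.union_eq_right.2 hW] at hsuper
  unfold minorConn
  omega

lemma minorConn_inter_add_minorConn_insert_union_le {U W Z₁ Z₂ : Finset α} {e : α}
    (he₁ : e ∉ Z₁) (he₂ : e ∉ Z₂) :
    minorConn N U W (Z₁ ∩ Z₂) + minorConn N U W (insert e (Z₁ ∪ Z₂)) ≤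
      minorConn N (insert e U) W Z₁ + minorConn N U (insert e W) Z₂ + 1 := by
  have hsuper := boxDim_supermodular N (Z₁ ∪ insert e U) (Z₁ ∪ W) (Z₂ ∪ U) (Z₂ ∪ insert e W)
  have hinter₁ : (Z₁ ∪ insert e U) ∩ (Z₂ ∪ U) = Z₁ ∩ Z₂ ∪ U := by grind
  have hinter₂ : (Z₁ ∪ W) ∩ (Z₂ ∪ insert e W) = Z₁ ∩ Z₂ ∪ W := by grind
  have hunion₁ : Z₁ ∪ insert e U ∪ (Z₂ ∪ U) = insert e (Z₁ ∪ Z₂) ∪ U := by grind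
  have hunion₂ : Z₁ ∪ W ∪ (Z₂ ∪ insert e W) = insert e (Z₁ ∪ Z₂) ∪ W := by grind
  rw [hinter₁, hinter₂, hunion₁, hunion₂] at hsuper
  have hdelete := boxDim_mono N (Finset.subset_insert e U) (Finset.Subset.refl W)
  have hcontract := boxDim_mono N (Finset.Subset.refl U) (Finset.subset_insert e W)
  have hcard := Finset.card_inter_add_card_union Z₁ Z₂
  have hcard_insert := Finset.card_insert_of_notMem (Finset.notMem_union.2 ⟨he₁, he₂⟩)
  unfold minorConn
  omega

lemma forall_le_minorConn_insert_or_insert {X R : Finset α} {e : α} {k : ℤ} (heX : e ∉ X)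
    (heR : e ∉ R) {U W : Finset α}
    (hk : ∀ Z, X ⊆ Z → Z ⊆ X ∪ insert e R → k ≤ minorConn N U W Z) :
    (∀ Z, X ⊆ Z → Z ⊆ X ∪ R → k ≤ minorConn N (insert e U) W Z) ∨
      ∀ Z, X ⊆ Z → Z ⊆ X ∪ R → k ≤ minorConn N U (insert e W) Z := by
  by_contra! h
  obtain ⟨⟨Z₁, hXZ₁, hZ₁, hlt₁⟩, Z₂, hXZ₂, hZ₂, hlt₂⟩ := h
  have hle := minorConn_inter_add_minorConn_insert_union_le N (U := U) (W := W)
    (show e ∉ Z₁ by grind) (show e ∉ Z₂ by grind)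
  have hinter := hk (Z₁ ∩ Z₂) (by grind) (by grind)
  have hunion := hk (insert e (Z₁ ∪ Z₂)) (by grind) (by grind)
  omega

lemma exists_partition_le_minorConn {X R : Finset α} (hXR : Disjoint X R) {k : ℤ} :
    ∀ U W : Finset α, (∀ Z, X ⊆ Z → Z ⊆ X ∪ R → k ≤ minorConn N U W Z) →
      ∃ U' W' : Finset α, U' ∪ W' = R ∧ Disjoint U' W' ∧
        k ≤ minorConn N (U ∪ U') (W ∪ W') X := by
  induction R using Finset.induction_on with
  | empty =>
    intro U W hk
    exact ⟨∅, ∅, by simp, by simp, by simpa using hk X subset_rfl (by simp)⟩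
  | insert e R heR ih =>
    intro U W hk
    rw [Finset.disjoint_insert_right] at hXR
    rcases forall_le_minorConn_insert_or_insert N hXR.1 heR hk with hdelete | hcontract
    · obtain ⟨U', W', rfl, hUW', hle⟩ := ih hXR.2 _ _ hdelete
      refine ⟨insert e U', W', Finset.insert_union .., ?_, ?_⟩
      · grind
      · rwa [Finset.union_insert, ← Finset.insert_union]
    · obtain ⟨U', W', rfl, hUW', hle⟩ := ih hXR.2 _ _ hcontract
      refine ⟨U', insert e W', Finset.union_insert .., ?_, ?_⟩
      · grind
      · rwa [Finset.union_insert, ← Finset.insert_union]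

end Linking

lemma IsLagrangian.minorConn_le_minorConn_empty {α : Type*} [Fintype α] [DecidableEq α]
    {β : LinearMap.BilinForm F (F × F)} {N : Submodule F (α → F × F)} (hN : IsLagrangian β N)
    (hβ : IsHyperbolic β) {U W X Z : Finset α} (hUW : Disjoint U W)
    (hX : Disjoint X (U ∪ W)) (hXZ : X ⊆ Z) (hZ : Z ⊆ X ∪ (U ∪ W)) :
    minorConn N U W X ≤ minorConn N ∅ ∅ Z := by
  have hrest : (X ∪ (U ∪ W))ᶜ = (Z ∪ (U \ Z ∪ W \ Z))ᶜ := by grind [Finset.mem_compl]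
  calc minorConn N U W X
      = minorConn N U W (X ∪ (U ∪ W))ᶜ := (hN.minorConn_compl hβ hUW hX).symm
    _ ≤ minorConn N (U \ Z) (W \ Z) (X ∪ (U ∪ W))ᶜ :=
        minorConn_anti N Finset.sdiff_subset Finset.sdiff_subset
          (disjoint_compl_left.mono_right Finset.subset_union_right)
    _ = minorConn N (U \ Z) (W \ Z) (Z ∪ (U \ Z ∪ W \ Z))ᶜ := by rw [hrest]
    _ = minorConn N (U \ Z) (W \ Z) Z :=
        hN.minorConn_compl hβ (hUW.mono Finset.sdiff_subset Finset.sdiff_subset)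
          (by grind [Finset.disjoint_left])
    _ ≤ minorConn N ∅ ∅ Z :=
        minorConn_anti N (Finset.empty_subset _) (Finset.empty_subset _)
          (by grind [Finset.disjoint_left])

theorem tutte_linking_general {α : Type*} [Fintype α] [DecidableEq α]
    {β : LinearMap.BilinForm F (F × F)} (hβ : IsHyperbolic β) {N : Submodule F (α → F × F)}
    (hN : IsLagrangian β N) {X Y : Finset α} (hXY : Disjoint X Y) (k : ℚ) :
    (∀ Z : Finset α, X ⊆ Z → Z ⊆ Yᶜ → k ≤ lam N Z) ↔
      ∃ U W : Finset α, U ∪ W = (X ∪ Y)ᶜ ∧ U ∩ W = ∅ ∧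
        k ≤ lam (minorCG β N W U) (X.subtype (· ∈ (W ∪ U)ᶜ)) := by
  have hX : Disjoint X (X ∪ Y)ᶜ := disjoint_compl_right.mono_left Finset.subset_union_left
  have hY : Yᶜ = X ∪ (X ∪ Y)ᶜ := by grind [Finset.mem_compl, Finset.disjoint_left]
  simp only [hN.lam_eq_minorConn hβ, ← Int.ceil_le, hY, ← Finset.disjoint_iff_inter_eq_empty]
  constructor
  · intro hk
    obtain ⟨U, W, hpart, hUW, hle⟩ := exists_partition_le_minorConn N hX ∅ ∅ hk
    refine ⟨U, W, hpart, hUW, ?_⟩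
    rw [hN.lam_minorCG hβ hUW (hpart ▸ hX)]
    simpa [Int.ceil_le] using hle
  · rintro ⟨U, W, hpart, hUW, hle⟩ Z hXZ hZ
    rw [← hpart] at hX hZ
    rw [hN.lam_minorCG hβ hUW hX, ← Int.ceil_le] at hle
    exact hle.trans (hN.minorConn_le_minorConn_empty hβ hUW hX hXZ hZ)

/-- **Generalization of Tutte's linking theorem** for Lagrangian chain-groups:
for disjoint `X, Y ⊆ V` and any integer `k`, every `Z` with `X ⊆ Z ⊆ V∖Y`
satisfies `λ_N(Z) ≥ k` if and only if some minor `N∖U/W` of `N` on `X ∪ Y`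
satisfies `λ_{N∖U/W}(X) ≥ k`; that is,
`min{λ_N(Z) : X ⊆ Z ⊆ V∖Y} = max{λ_{N∖U/W}(X) : (U,W) partitions V∖(X∪Y)}`. -/
theorem tutte_linking (β : (F × F) →ₗ[F] (F × F) →ₗ[F] F)
    (hβ : β = bplusL F ∨ β = bminusL F)
    (N : Submodule F (V → F × F))
    (hiso : ∀ u ∈ N, ∀ w ∈ N, ∑ x, β (u x) (w x) = 0)
    (hdim : Module.finrank F N = Fintype.card V)
    (X Y : Finset V) (hXY : Disjoint X Y) (k : ℤ) :
    (∀ Z : Finset V, X ⊆ Z → Z ⊆ Yᶜ → (k : ℚ) ≤ lam N Z)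
      ↔ ∃ U W : Finset V, U ∪ W = (X ∪ Y)ᶜ ∧ U ∩ W = ∅ ∧
          (k : ℚ) ≤ lam (minorCG β N W U)
            (X.subtype (· ∈ ((W ∪ U)ᶜ : Finset V))) :=
  tutte_linking_general (hβ.elim (· ▸ isHyperbolic_bplusL) (· ▸ isHyperbolic_bminusL))
    ⟨by simpa only [chainForm_apply] using hiso, hdim⟩ hXY k
end
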